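/- Let (W, S) be a Coxeter system of finite rank and let A be a subset of W. Suppose w W_J w⁻¹ is a parabolic subgroup containing A such that |J| is minimal among all parabolic subgroups x W_K x⁻¹ containing A (minimal with respect to |K|). Then w W_J w⁻¹ is contained in every parabolic subgroup of W containing A; equivalently, w W_J w⁻¹ equals the parabolic closure Pc(A) of A. -/

import Mathlib

/-!
The crux is that an intersection of two parabolic subgroups is again parabolic, in Kilmoyer's
form: if `d` has minimal length in its double coset `W_J d W_K`, then `W_J ∩ d W_K d⁻¹` is the
special subgroup `W_L`, where `L` consists of the `j ∈ J` such that `s_j = d s_k d⁻¹` for some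
`k ∈ K` (`ParabolicClosure.kilmoyer`). Given a parabolic subgroup `x W_K x⁻¹` containing `A`, pick
a minimal `d` in the double coset `W_J (w⁻¹ x) W_K`. Up to conjugation, `A` lies in
`W_J ∩ d W_K d⁻¹ = W_L` with `L ⊆ J`, so minimality of `|J|` forces `L = J`, and then
`W_J ≤ d W_K d⁻¹`, which is the desired inclusion after conjugating back.

Kilmoyer's theorem is proved by induction on a reduced word of the `W_J`-component, using the
exchange condition (`ParabolicClosure.exchange`) and its consequences: elements of `W_K` have
reduced words with letters in `K`, and lengths add in a product of an element of `W_J` with a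
shortest representative of its coset. The exchange condition itself comes from the action of `W` on
`W × ZMod 2` in which `s_i` sends `(t, e)` to `(s_i t s_i, e + [t = s_i])`: it shows that the
parity of the multiplicity of `t` in the inversion sequence of a word depends only on the product
of the word.
-/

namespace ParabolicClosure

open CoxeterSystem

variable {B W : Type*} [Group W] {M : CoxeterMatrix B} (cs : CoxeterSystem M W)

/-! ### The exchange condition -/

open Classical in
/-- The map `(t, e) ↦ (s_i t s_i, e + [t = s_i])` on `W × ZMod 2`. The first component ranges over
all of `W`, although only reflections `t` matter. -/
noncomputable def signedConj (i : B) : Function.End (W × ZMod 2) :=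
  fun p => (cs.simple i * p.1 * cs.simple i, p.2 + if p.1 = cs.simple i then 1 else 0)

open Classical in
theorem signedConj_pow (i j : B) (n : ℕ) (t : W) (e : ZMod 2) :
    ((signedConj cs i * signedConj cs j) ^ n) (t, e) =
      ((cs.simple i * cs.simple j) ^ n * t * ((cs.simple i * cs.simple j) ^ n)⁻¹,
        e + ∑ k ∈ Finset.range (2 * n),
          if t = cs.simple j * (cs.simple i * cs.simple j) ^ k then 1 else 0) := by
  induction n with
  | zero => simp; rfl
  | succ n ih =>
    rw [pow_succ']
    change (signedConj cs i) (signedConj cs j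
      (((signedConj cs i * signedConj cs j) ^ n) (t, e))) = _
    rw [ih]
    set r := cs.simple i * cs.simple j with hr
    have hinv : r⁻¹ = cs.simple j * cs.simple i := by simp [hr]
    have hj : cs.simple j * r * cs.simple j = r⁻¹ := by
      rw [hinv, hr]; simp [mul_assoc]
    have hjn : ∀ n : ℕ, (r ^ n)⁻¹ * cs.simple j = cs.simple j * r ^ n := by
      intro n
      induction n with
      | zero => simp
      | succ n ih =>
        have h1 : r⁻¹ * cs.simple j = cs.simple j * r := by
          rw [← hj]; simp [mul_assoc]
        calc (r ^ (n + 1))⁻¹ * cs.simple j = (r ^ n)⁻¹ * (r⁻¹ * cs.simple j) := by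
              rw [pow_succ', mul_inv_rev, mul_assoc]
          _ = ((r ^ n)⁻¹ * cs.simple j) * r := by rw [h1, mul_assoc]
          _ = cs.simple j * r ^ (n + 1) := by rw [ih, mul_assoc, ← pow_succ]
    have e1 : (r ^ n * t * (r ^ n)⁻¹ = cs.simple j) ↔ t = cs.simple j * r ^ (2 * n) := by
      rw [mul_inv_eq_iff_eq_mul, ← eq_inv_mul_iff_mul_eq, ← mul_assoc, hjn, mul_assoc,
        ← pow_add, two_mul]
    have e2 : (cs.simple j * (r ^ n * t * (r ^ n)⁻¹) * cs.simple j = cs.simple i) ↔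
        t = cs.simple j * r ^ (2 * n + 1) := by
      have h0 : (cs.simple j * (r ^ n * t * (r ^ n)⁻¹) * cs.simple j = cs.simple i) ↔
          r ^ n * t * (r ^ n)⁻¹ = cs.simple j * r := by
        constructor
        · intro h
          calc r ^ n * t * (r ^ n)⁻¹
              = cs.simple j * (cs.simple j * (r ^ n * t * (r ^ n)⁻¹) * cs.simple j) *
                cs.simple j := by simp [mul_assoc]
            _ = cs.simple j * r := by rw [h, hr, mul_assoc]
        · intro h
          rw [h, hr]; simp [mul_assoc]
      rw [h0, mul_inv_eq_iff_eq_mul, ← eq_inv_mul_iff_mul_eq, ← mul_assoc, ← mul_assoc, hjn,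
        mul_assoc, mul_assoc, ← pow_succ', ← pow_add]
      have : n + (n + 1) = 2 * n + 1 := by ring
      rw [this]
    have hk : 2 * (n + 1) = 2 * n + 1 + 1 := by ring
    rw [hk, Finset.sum_range_succ, Finset.sum_range_succ]
    simp only [signedConj, e1, e2]
    refine Prod.ext ?_ ?_
    · simp only [pow_succ', mul_inv_rev, hinv]
      simp only [hr, mul_assoc]
    · simp only [add_assoc]

theorem signedConj_isLiftable : M.IsLiftable (signedConj cs) := by
  classical
  intro i j
  funext ⟨t, e⟩
  rw [signedConj_pow, two_mul, Finset.sum_range_add]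
  simp only [pow_add, cs.simple_mul_simple_pow, one_mul, inv_one, mul_one]
  rw [CharTwo.add_self_eq_zero, add_zero]
  rfl

/-- The action of `W` on `W × ZMod 2` extending `signedConj`. -/
noncomputable def signedAction : W →* Function.End (W × ZMod 2) :=
  cs.lift ⟨signedConj cs, signedConj_isLiftable cs⟩

open Classical in
theorem signedAction_wordProd (ω : List B) (t : W) (e : ZMod 2) :
    signedAction cs (cs.wordProd ω) (t, e) =
      (cs.wordProd ω * t * (cs.wordProd ω)⁻¹, e + ((cs.rightInvSeq ω).count t : ZMod 2)) := by
  induction ω with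
  | nil => simp; rfl
  | cons i ω ih =>
    rw [cs.wordProd_cons, map_mul]
    change signedAction cs (cs.simple i) (signedAction cs (cs.wordProd ω) (t, e)) = _
    rw [ih]
    have h1 : signedAction cs (cs.simple i) = signedConj cs i := by
      simp [signedAction, cs.lift_apply_simple]
    rw [h1]
    have h2 : (cs.wordProd ω * t * (cs.wordProd ω)⁻¹ = cs.simple i) ↔
        (cs.wordProd ω)⁻¹ * cs.simple i * cs.wordProd ω = t := by
      rw [mul_inv_eq_iff_eq_mul, mul_assoc, inv_mul_eq_iff_eq_mul, eq_comm]
    simp only [signedConj, rightInvSeq, List.count_cons, h2, beq_iff_eq]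
    refine Prod.ext ?_ ?_
    · simp [mul_assoc]
    · simp only [add_assoc]
      push_cast
      rfl

/-- If `s_i` is a right descent of the product of a (not necessarily reduced) word, then `s_i`
occurs in the inversion sequence of the word: its multiplicity has the same parity as in a reduced
word ending in `i`, where it is `1`. -/
theorem simple_mem_rightInvSeq {ω : List B} {i : B}
    (h : cs.IsRightDescent (cs.wordProd ω) i) : cs.simple i ∈ cs.rightInvSeq ω := by
  classical
  obtain ⟨ω', hω', hp⟩ := cs.exists_isReduced (cs.wordProd ω * cs.simple i)
  have hprod : cs.wordProd (ω'.concat i) = cs.wordProd ω := by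
    rw [cs.wordProd_concat, ← hp]; simp
  have hred : cs.IsReduced (ω'.concat i) := by
    have h1 := cs.isRightDescent_iff.1 h
    rw [hp, hω'.eq] at h1
    rw [CoxeterSystem.IsReduced, hprod, ← h1]; simp
  have hmem : cs.simple i ∈ cs.rightInvSeq (ω'.concat i) := by
    rw [cs.rightInvSeq_concat]; simp
  have hcount := List.count_eq_one_of_mem hred.nodup_rightInvSeq hmem
  have e1 := signedAction_wordProd cs (ω'.concat i) (cs.simple i) 0
  rw [hprod, signedAction_wordProd, hcount] at e1
  have e2 := congrArg Prod.snd e1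
  by_contra hn
  rw [List.count_eq_zero_of_not_mem hn] at e2
  simp at e2

theorem exchange {ω : List B} {i : B} (h : cs.IsLeftDescent (cs.wordProd ω) i) :
    ∃ k < ω.length, cs.simple i * cs.wordProd ω = cs.wordProd (ω.eraseIdx k) := by
  have h1 : cs.IsRightDescent (cs.wordProd ω.reverse) i := by
    rw [cs.wordProd_reverse, cs.isRightDescent_inv_iff]; exact h
  have h2 := simple_mem_rightInvSeq cs h1
  rw [cs.rightInvSeq_reverse, List.mem_reverse] at h2
  obtain ⟨k, hk, hk'⟩ := List.mem_iff_getElem.1 h2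
  refine ⟨k, by simpa using hk, ?_⟩
  rw [← cs.getD_leftInvSeq_mul_wordProd, List.getD_eq_getElem _ _ hk, hk']

theorem exchange_append {α β : List B} {i : B}
    (h : cs.IsLeftDescent (cs.wordProd α * cs.wordProd β) i) :
    (∃ k < α.length, cs.simple i * cs.wordProd α = cs.wordProd (α.eraseIdx k)) ∨
    (∃ k < β.length, cs.simple i * (cs.wordProd α * cs.wordProd β) =
      cs.wordProd α * cs.wordProd (β.eraseIdx k)) := by
  rw [← cs.wordProd_append] at h
  obtain ⟨k, hk, he⟩ := exchange cs h
  rcases lt_or_ge k α.length with hlt | hge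
  · left
    refine ⟨k, hlt, ?_⟩
    rw [List.eraseIdx_append_of_lt_length hlt, cs.wordProd_append, cs.wordProd_append,
      ← mul_assoc] at he
    exact mul_right_cancel he
  · right
    rw [List.length_append] at hk
    refine ⟨k - α.length, by omega, ?_⟩
    rw [List.eraseIdx_append_of_length_le hge, cs.wordProd_append, cs.wordProd_append] at he
    exact he

/-! ### Special subgroups and minimal coset representatives -/

/-- The special subgroup `W_J`. -/
abbrev special (J : Set B) : Subgroup W := Subgroup.closure (cs.simple '' J)

theorem simple_mem_special {J : Set B} {j : B} (hj : j ∈ J) : cs.simple j ∈ special cs J :=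
  Subgroup.subset_closure ⟨j, hj, rfl⟩

theorem wordProd_mem_special {J : Set B} {ω : List B} (h : ∀ j ∈ ω, j ∈ J) :
    cs.wordProd ω ∈ special cs J := by
  induction ω with
  | nil => simp
  | cons i ω ih =>
    rw [cs.wordProd_cons]
    exact mul_mem (simple_mem_special cs (h i (by simp)))
      (ih fun j hj => h j (by simp [hj]))

theorem length_wordProd_eraseIdx_lt {ω : List B} {k : ℕ} (hk : k < ω.length) :
    cs.length (cs.wordProd (ω.eraseIdx k)) < ω.length := by
  have h1 := cs.length_wordProd_le (ω.eraseIdx k)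
  have h2 := List.length_eraseIdx_add_one hk
  omega

theorem exists_isReduced_of_mem_special {J : Set B} {u : W} (hu : u ∈ special cs J) :
    ∃ ω : List B, cs.IsReduced ω ∧ (∀ j ∈ ω, j ∈ J) ∧ u = cs.wordProd ω := by
  have step : ∀ j ∈ J, ∀ v : W,
      (∃ ω : List B, cs.IsReduced ω ∧ (∀ j ∈ ω, j ∈ J) ∧ v = cs.wordProd ω) →
      ∃ ω : List B, cs.IsReduced ω ∧ (∀ j ∈ ω, j ∈ J) ∧ cs.simple j * v = cs.wordProd ω := by
    rintro j hj v ⟨ω, hω, hωJ, rfl⟩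
    by_cases hd : cs.IsLeftDescent (cs.wordProd ω) j
    · obtain ⟨k, hk, he⟩ := exchange cs hd
      refine ⟨ω.eraseIdx k, ?_, fun b hb => hωJ b (List.mem_of_mem_eraseIdx hb), he⟩
      have h1 := cs.isLeftDescent_iff.1 hd
      have h2 := List.length_eraseIdx_add_one hk
      rw [he, hω.eq] at h1
      rw [CoxeterSystem.IsReduced]
      omega
    · refine ⟨j :: ω, ?_, ?_, (cs.wordProd_cons j ω).symm⟩
      · rw [CoxeterSystem.IsReduced, cs.wordProd_cons, cs.not_isLeftDescent_iff.1 hd, hω.eq]; simp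
      · simpa [hj] using hωJ
  induction hu using Subgroup.closure_induction_left with
  | one => exact ⟨[], by simp [CoxeterSystem.IsReduced], by simp, by simp⟩
  | mul_left x hx y hy ih =>
    obtain ⟨j, hj, rfl⟩ := hx
    exact step j hj y ih
  | inv_mul_cancel x hx y hy ih =>
    obtain ⟨j, hj, rfl⟩ := hx
    rw [cs.inv_simple]
    exact step j hj y ih

/-- Lengths add when the right factor is shortest in its coset `W_J d`. -/
theorem length_mul_of_minimal {J : Set B} {d : W}
    (hd : ∀ a ∈ special cs J, cs.length d ≤ cs.length (a * d)) :
    ∀ ω : List B, cs.IsReduced ω → (∀ j ∈ ω, j ∈ J) →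
      cs.length (cs.wordProd ω * d) = cs.length (cs.wordProd ω) + cs.length d := by
  intro ω
  induction ω with
  | nil => simp
  | cons j ω ih =>
    intro hω hJ
    have hω' : cs.IsReduced ω := by simpa using hω.drop 1
    have hJ' : ∀ j ∈ ω, j ∈ J := fun b hb => hJ b (by simp [hb])
    have hωm := wordProd_mem_special cs hJ'
    have hlen := ih hω' hJ'
    rw [hω.eq, cs.wordProd_cons, mul_assoc]
    rw [hω'.eq] at hlen
    by_cases hdesc : cs.IsLeftDescent (cs.wordProd ω * d) j
    · exfalso
      obtain ⟨δ, hδ, rfl⟩ := cs.exists_isReduced d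
      rcases exchange_append cs hdesc with ⟨k, hk, he⟩ | ⟨k, hk, he⟩
      · have h1 := hω.eq
        rw [cs.wordProd_cons, he] at h1
        have h2 := length_wordProd_eraseIdx_lt cs hk
        simp only [List.length_cons] at h1
        omega
      · have h1 := hd ((cs.wordProd ω)⁻¹ * (cs.simple j * cs.wordProd ω))
          (mul_mem (inv_mem hωm) (mul_mem (simple_mem_special cs (hJ j (by simp))) hωm))
        have h2 : (cs.wordProd ω)⁻¹ * (cs.simple j * cs.wordProd ω) * cs.wordProd δ =
            cs.wordProd (δ.eraseIdx k) := by
          rw [mul_assoc, mul_assoc, he]; simp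
        have h3 := length_wordProd_eraseIdx_lt cs hk
        rw [h2, hδ.eq] at h1
        omega
    · rw [cs.not_isLeftDescent_iff.1 hdesc, hlen, List.length_cons]
      omega

/-! ### Intersections of parabolic subgroups -/

/-- The nontrivial inclusion of Kilmoyer's theorem: for `d` shortest in both `W_J d` and `d W_K`
(in particular for `d` shortest in `W_J d W_K`), the intersection `W_J ∩ d W_K d⁻¹` is contained
in the special subgroup generated by the `s_j`, `j ∈ J`, that have the form `d s_k d⁻¹`,
`k ∈ K`. -/
theorem kilmoyer {J K : Set B} {d : W}
    (hJ : ∀ a ∈ special cs J, cs.length d ≤ cs.length (a * d))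
    (hK : ∀ b ∈ special cs K, cs.length d ≤ cs.length (d * b))
    {u v : W} (hu : u ∈ special cs J) (hv : v ∈ special cs K) (huv : u * d = d * v) :
    u ∈ special cs {j ∈ J | ∃ k ∈ K, cs.simple j * d = d * cs.simple k} := by
  -- `d⁻¹` is shortest in `W_K d⁻¹`, so lengths also add in `d W_K`.
  have hadd : ∀ y ∈ special cs K, cs.length (d * y) = cs.length d + cs.length y := by
    intro y hy
    obtain ⟨ω, hω, hωK, he⟩ := exists_isReduced_of_mem_special cs (inv_mem hy)
    have h := length_mul_of_minimal cs (J := K) (d := d⁻¹) (fun a ha => by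
      rw [cs.length_inv, ← cs.length_inv (a * d⁻¹)]
      simpa using hK a⁻¹ (inv_mem ha)) ω hω hωK
    rw [← he, ← mul_inv_rev, cs.length_inv, cs.length_inv, cs.length_inv] at h
    omega
  obtain ⟨ω, hω, hωJ, rfl⟩ := exists_isReduced_of_mem_special cs hu
  clear hu
  induction ω generalizing v with
  | nil => simp
  | cons j ω ih =>
    have hω' : cs.IsReduced ω := by simpa using hω.drop 1
    have hωJ' : ∀ j ∈ ω, j ∈ J := fun b hb => hωJ b (by simp [hb])
    have hjJ : j ∈ J := hωJ j (by simp)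
    have l1 := length_mul_of_minimal cs hJ _ hω hωJ
    have l2 := length_mul_of_minimal cs hJ _ hω' hωJ'
    rw [hω.eq] at l1
    rw [hω'.eq] at l2
    have hs : cs.simple j * (d * v) = cs.wordProd ω * d := by
      rw [← huv, cs.wordProd_cons]; simp [mul_assoc]
    obtain ⟨δ, hδ, hdδ⟩ := cs.exists_isReduced d
    obtain ⟨ν, hν, hνK, rfl⟩ := exists_isReduced_of_mem_special cs hv
    have hdesc : cs.IsLeftDescent (cs.wordProd δ * cs.wordProd ν) j := by
      rw [← hdδ, IsLeftDescent, hs, ← huv, l1, l2, List.length_cons]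
      omega
    rcases exchange_append cs hdesc with ⟨k, hk, he⟩ | ⟨k, hk, he⟩
    · exfalso
      have h1 := hJ _ (simple_mem_special cs hjJ)
      have h2 := length_wordProd_eraseIdx_lt cs hk
      rw [← he, ← hdδ] at h2
      have h3 := hδ.eq
      rw [← hdδ] at h3
      omega
    · rw [← hdδ] at he
      have hν' : cs.wordProd (ν.eraseIdx k) ∈ special cs K :=
        wordProd_mem_special cs fun b hb => hνK b (List.mem_of_mem_eraseIdx hb)
      set y := cs.wordProd (ν.eraseIdx k) * (cs.wordProd ν)⁻¹ with hy
      have hyK : y ∈ special cs K := mul_mem hν' (inv_mem hv)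
      have hjd : cs.simple j * d = d * y := by
        rw [hy, ← mul_assoc, ← he]; simp [mul_assoc]
      have hylen : cs.length y = 1 := by
        have h1 := hadd y hyK
        have h2 := hJ _ (simple_mem_special cs hjJ)
        have h3 := cs.length_simple_mul d j
        rw [hjd] at h2 h3
        omega
      obtain ⟨κ, hκ, hκK, hyκ⟩ := exists_isReduced_of_mem_special cs hyK
      have hκ1 : κ.length = 1 := by rw [← hκ.eq, ← hyκ, hylen]
      obtain ⟨b, rfl⟩ := List.length_eq_one_iff.1 hκ1
      rw [cs.wordProd_singleton] at hyκ
      rw [cs.wordProd_cons]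
      refine mul_mem (simple_mem_special cs ⟨hjJ, b, hκK b (by simp), by rw [hjd, hyκ]⟩) ?_
      refine ih (v := y * cs.wordProd ν) (mul_mem hyK hv) hω' hωJ' ?_
      rw [← hs, ← mul_assoc, hjd, mul_assoc]

theorem mem_parabolic {x g : W} {K : Set B} :
    g ∈ (special cs K).map (MulAut.conj x).toMonoidHom ↔ ∃ v ∈ special cs K, x * v * x⁻¹ = g := by
  simp [Subgroup.mem_map]

/-- The inclusion of a parabolic subgroup of minimal rank in any other one containing `A`. -/
theorem minimal_le [Finite B] {A : Set W} {w : W} {J : Set B}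
    (hA : A ⊆ ((special cs J).map (MulAut.conj w).toMonoidHom : Set W))
    (hmin : ∀ (x : W) (K : Set B),
      A ⊆ ((special cs K).map (MulAut.conj x).toMonoidHom : Set W) → J.ncard ≤ K.ncard)
    {x : W} {K : Set B} (hx : A ⊆ ((special cs K).map (MulAut.conj x).toMonoidHom : Set W)) :
    (special cs J).map (MulAut.conj w).toMonoidHom ≤
      (special cs K).map (MulAut.conj x).toMonoidHom := by
  -- `d = a * (w⁻¹ * x) * b` is a shortest element of the double coset `W_J (w⁻¹ x) W_K`.
  let len : special cs J × special cs K → ℕ := fun p => cs.length (p.1 * (w⁻¹ * x) * p.2)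
  obtain ⟨⟨⟨a, ha⟩, ⟨b, hb⟩⟩, hab⟩ : ∃ p, ∀ q, len p ≤ len q :=
    ⟨Function.argmin len, fun q => Function.argmin_le len q⟩
  obtain ⟨d, hd⟩ : ∃ d, d = a * (w⁻¹ * x) * b := ⟨_, rfl⟩
  have hdJ : ∀ c ∈ special cs J, cs.length d ≤ cs.length (c * d) := fun c hc => by
    have h := hab (⟨c * a, mul_mem hc ha⟩, ⟨b, hb⟩)
    simpa [len, hd, mul_assoc] using h
  have hdK : ∀ c ∈ special cs K, cs.length d ≤ cs.length (d * c) := fun c hc => by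
    have h := hab (⟨a, ha⟩, ⟨b * c, mul_mem hb hc⟩)
    simpa [len, hd, mul_assoc] using h
  set L : Set B := {j ∈ J | ∃ k ∈ K, cs.simple j * d = d * cs.simple k} with hL
  have hAL : A ⊆ ((special cs L).map (MulAut.conj (w * a⁻¹)).toMonoidHom : Set W) := by
    intro g hg
    obtain ⟨u, hu, hug⟩ := (mem_parabolic cs).1 (hA hg)
    obtain ⟨v, hv, hvg⟩ := (mem_parabolic cs).1 (hx hg)
    refine (mem_parabolic cs).2 ⟨a * u * a⁻¹, ?_, by rw [← hug]; group⟩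
    refine kilmoyer cs hdJ hdK (v := b⁻¹ * v * b) (mul_mem (mul_mem ha hu) (inv_mem ha))
      (mul_mem (mul_mem (inv_mem hb) hv) hb) ?_
    calc a * u * a⁻¹ * d = a * w⁻¹ * (w * u * w⁻¹) * x * b := by rw [hd]; group
      _ = a * w⁻¹ * (x * v * x⁻¹) * x * b := by rw [hug, hvg]
      _ = d * (b⁻¹ * v * b) := by rw [hd]; group
  have hLJ : L = J := Set.eq_of_subset_of_ncard_le (fun j hj => hj.1) (hmin _ _ hAL)
  have hle : special cs J ≤ (special cs K).map (MulAut.conj d).toMonoidHom := by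
    rw [special, Subgroup.closure_le]
    rintro _ ⟨j, hj, rfl⟩
    rw [← hLJ] at hj
    obtain ⟨-, k, hk, he⟩ := hj
    exact (mem_parabolic cs).2 ⟨_, simple_mem_special cs hk, by rw [← he]; group⟩
  intro g hg
  obtain ⟨u, hu, rfl⟩ := (mem_parabolic cs).1 hg
  obtain ⟨v, hv, hvu⟩ := (mem_parabolic cs).1 (hle (mul_mem (mul_mem ha hu) (inv_mem ha)))
  refine (mem_parabolic cs).2 ⟨b * v * b⁻¹, mul_mem (mul_mem hb hv) (inv_mem hb), ?_⟩
  calc x * (b * v * b⁻¹) * x⁻¹ = w * a⁻¹ * (d * v * d⁻¹) * a * w⁻¹ := by rw [hd]; group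
    _ = w * u * w⁻¹ := by rw [hvu]; group

end ParabolicClosure

/-- If `w W_J w⁻¹` is a parabolic subgroup containing `A ⊆ W` of minimal rank `|J|`
among all parabolic subgroups containing `A`, then `w W_J w⁻¹` is contained in every
parabolic subgroup containing `A`; equivalently it equals the parabolic closure of `A`. -/
theorem minimal_parabolic_eq_parabolic_closure
    {B : Type*} [Finite B] {W : Type*} [Group W] {M : CoxeterMatrix B}
    (cs : CoxeterSystem M W) (A : Set W) (w : W) (J : Set B)
    (hA : A ⊆ ((Subgroup.closure (cs.simple '' J)).map (MulAut.conj w).toMonoidHom : Set W))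
    (hmin : ∀ (x : W) (K : Set B),
      A ⊆ ((Subgroup.closure (cs.simple '' K)).map (MulAut.conj x).toMonoidHom : Set W) →
      J.ncard ≤ K.ncard) :
    (∀ G : Subgroup W,
      (∃ (x : W) (K : Set B),
        G = (Subgroup.closure (cs.simple '' K)).map (MulAut.conj x).toMonoidHom) →
      A ⊆ (G : Set W) →
      (Subgroup.closure (cs.simple '' J)).map (MulAut.conj w).toMonoidHom ≤ G) ∧
    (Subgroup.closure (cs.simple '' J)).map (MulAut.conj w).toMonoidHom =
      sInf {G : Subgroup W |
        (∃ (x : W) (K : Set B),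
          G = (Subgroup.closure (cs.simple '' K)).map (MulAut.conj x).toMonoidHom) ∧
        A ⊆ (G : Set W)} := by
  have key : ∀ G : Subgroup W,
      (∃ (x : W) (K : Set B),
        G = (Subgroup.closure (cs.simple '' K)).map (MulAut.conj x).toMonoidHom) →
      A ⊆ (G : Set W) →
      (Subgroup.closure (cs.simple '' J)).map (MulAut.conj w).toMonoidHom ≤ G := by
    rintro _ ⟨x, K, rfl⟩ hx
    exact ParabolicClosure.minimal_le cs hA hmin hx
  exact ⟨key, le_antisymm (le_sInf fun G hG => key G hG.1 hG.2) (sInf_le ⟨⟨w, J, rfl⟩, hA⟩)⟩
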